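/- Let k ≤ −2 be an integer and 1 ≤ p ≤ q ≤ ∞. Then there is a constant C independent of k and g such that ‖r^{1/q} sup_{1<t<2} |φ_k(r) 𝒜_t 𝒫_{<−k} g|‖_{L^q_{r,x₃}} ≤ C · 2^{3k/q − 2k/p} ‖g‖_{L^p}. -/

import Mathlib

open MeasureTheory Real Set
open scoped ENNReal

noncomputable section

/-- Euclidean norm on `ℝ²` (the product norm on `ℝ × ℝ` is the sup norm, so we
spell out the Euclidean one). -/
def enorm2 (ξ : ℝ × ℝ) : ℝ := Real.sqrt (ξ.1 ^ 2 + ξ.2 ^ 2)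

/-- Fourier transform on `ℝ²` (nonunitary convention). -/
def ft2 (g : ℝ × ℝ → ℂ) (ξ : ℝ × ℝ) : ℂ :=
  ∫ y : ℝ × ℝ, Complex.exp (-(Complex.I) * ((y.1 * ξ.1 + y.2 * ξ.2 : ℝ) : ℂ)) * g y

/-- Fourier transform of the arclength measure `dσ` on the unit circle in `ℝ²`. -/
def sigmaHat (ξ : ℝ × ℝ) : ℂ :=
  ∫ θ in Set.Ioc (0:ℝ) (2 * π),
    Complex.exp (-(Complex.I) * ((ξ.1 * Real.cos θ + ξ.2 * Real.sin θ : ℝ) : ℂ))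

/-- The operator `𝒜_t g(r,x₃) = (2π)⁻² ∫ e^{i(((r²+t²)/2)ξ₁+x₃ξ₂)} \widehat{dσ}(trξ) ĝ(ξ) dξ`. -/
def Aop (g : ℝ × ℝ → ℂ) (t r x₃ : ℝ) : ℂ :=
  (((2 * π) ^ (-2 : ℤ) : ℝ) : ℂ) *
    ∫ ξ : ℝ × ℝ,
      Complex.exp (Complex.I * ((((r ^ 2 + t ^ 2) / 2) * ξ.1 + x₃ * ξ.2 : ℝ) : ℂ)) *
        sigmaHat (t * r * ξ.1, t * r * ξ.2) * ft2 g ξ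

/-- A Littlewood–Paley bump: nonnegative, smooth, supported in `[1−10⁻³, 2+10⁻³]`,
with `∑_{j∈ℤ} φ(2^{−j}s) = 1` for all `s > 0`. -/
def IsLPBump (φ : ℝ → ℝ) : Prop :=
  ContDiff ℝ (⊤ : ℕ∞) φ ∧ (∀ s, 0 ≤ φ s) ∧
    Function.support φ ⊆ Set.Icc (1 - 1/1000) (2 + 1/1000) ∧
    ∀ s : ℝ, 0 < s → HasSum (fun j : ℤ => φ ((2:ℝ) ^ (-j) * s)) 1

/-- The Littlewood–Paley projection `𝒫_j`, defined via its multiplier `φ(2^{−j}|ξ|)`. -/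
def proj (φ : ℝ → ℝ) (j : ℤ) (g : ℝ × ℝ → ℂ) (x : ℝ × ℝ) : ℂ :=
  (((2 * π) ^ (-2 : ℤ) : ℝ) : ℂ) *
    ∫ ξ : ℝ × ℝ,
      Complex.exp (Complex.I * ((x.1 * ξ.1 + x.2 * ξ.2 : ℝ) : ℂ)) *
        ((φ ((2:ℝ) ^ (-j) * enorm2 ξ) : ℝ) : ℂ) * ft2 g ξ

/-- `φ_{<ℓ}(s) = ∑_{j<ℓ} φ(2^{−j} s)`. -/
def philt (φ : ℝ → ℝ) (l : ℤ) (s : ℝ) : ℝ :=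
  ∑' j : ℤ, if j < l then φ ((2:ℝ) ^ (-j) * s) else 0

/-- The projection `𝒫_{<ℓ}`, with multiplier `φ_{<ℓ}(|ξ|)`. -/
def projLt (φ : ℝ → ℝ) (l : ℤ) (g : ℝ × ℝ → ℂ) (x : ℝ × ℝ) : ℂ :=
  (((2 * π) ^ (-2 : ℤ) : ℝ) : ℂ) *
    ∫ ξ : ℝ × ℝ,
      Complex.exp (Complex.I * ((x.1 * ξ.1 + x.2 * ξ.2 : ℝ) : ℂ)) *
        ((philt φ l (enorm2 ξ) : ℝ) : ℂ) * ft2 g ξ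

/-!
`𝒜_t 𝒫_{<-k} g` is a circular average, over a circle of radius `t r`, of the convolution of `g`
with a Schwartz kernel at spatial scale `γ = 2 ^ k`, and such a kernel is dominated by a product of
two Cauchy densities of scale `γ`. On the support of `φ_k` we have `t r ≲ γ`, so moving along the
circle changes the Cauchy density in the second variable only by a constant factor. In the first
variable the centre `(r² + t²) / 2` does depend on `t`; bounding that density by `1 / γ` removes it.
Jensen's inequality then controls the supremum over `t` by the `L^p` norm of `g` localised to the
strip `|y₂ - x₃| ≲ γ`, with density at most `γ⁻²`. By Tonelli and interpolation with the trivial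
bound at exponent `∞`, the `L^q` norm in `(r, x₃)`, `r ≲ γ`, of these local norms is
`≲ γ ^ (2 / q - 2 / p) ‖g‖_p`, and the factor `r ^ (1 / q)` supplies the remaining power of `γ`.
-/

open ProbabilityTheory
open scoped NNReal SchwartzMap FourierTransform

/-! ### The low-frequency multiplier -/

namespace IsLPBump

variable {φ : ℝ → ℝ}

lemma eq_zero_of_lt (hφ : IsLPBump φ) {s : ℝ} (hs : s < 999 / 1000) : φ s = 0 := by
  by_contra h
  linarith [(hφ.2.2.1 h).1]

lemma eq_zero_of_gt (hφ : IsLPBump φ) {s : ℝ} (hs : 2001 / 1000 < s) : φ s = 0 := by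
  by_contra h
  linarith [(hφ.2.2.1 h).2]

lemma support_subset (hφ : IsLPBump φ) : φ.support ⊆ Icc 0 3 :=
  hφ.2.2.1.trans (Icc_subset_Icc (by norm_num) (by norm_num))

lemma le_one (hφ : IsLPBump φ) (s : ℝ) : φ s ≤ 1 := by
  rcases le_or_gt s 0 with hs | hs
  · exact (hφ.eq_zero_of_lt (by linarith)).trans_le zero_le_one
  · simpa using le_hasSum (hφ.2.2.2 s hs) 0 fun j _ => hφ.2.1 _

lemma norm_le_one (hφ : IsLPBump φ) (s : ℝ) : ‖φ s‖ ≤ 1 :=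
  (Real.norm_of_nonneg (hφ.2.1 s)).trans_le (hφ.le_one s)

lemma zpow_neg_mul_eq_zero_of_pos (hφ : IsLPBump φ) {s : ℝ} (hs₀ : 0 < s) (hs : s < 3 / 2)
    {j : ℤ} (hj : 0 < j) : φ ((2 : ℝ) ^ (-j) * s) = 0 := by
  have h : (2 : ℝ) ^ (-j) ≤ 2 ^ (-1 : ℤ) := zpow_le_zpow_right₀ one_le_two (by lia)
  rw [zpow_neg_one] at h
  exact hφ.eq_zero_of_lt (by nlinarith)

lemma zpow_neg_mul_eq_zero_of_neg (hφ : IsLPBump φ) {s : ℝ} (hs : 101 / 100 < s)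
    {j : ℤ} (hj : j < 0) : φ ((2 : ℝ) ^ (-j) * s) = 0 := by
  have h : (2 : ℝ) ^ (1 : ℤ) ≤ 2 ^ (-j) := zpow_le_zpow_right₀ one_le_two (by lia)
  rw [zpow_one] at h
  exact hφ.eq_zero_of_gt (by nlinarith)

lemma philt_zero_of_lt (hφ : IsLPBump φ) {s : ℝ} (hs₀ : 0 < s) (hs : s < 3 / 2) :
    philt φ 0 s = 1 - φ s := by
  refine (((hφ.2.2.2 s hs₀).sub (hasSum_ite_eq 0 (φ s))).congr_fun fun j => ?_).tsum_eq
  rcases lt_trichotomy j 0 with hj | rfl | hj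
  · simp [hj, hj.ne]
  · simp
  · simp [-zpow_neg, hj.not_gt, hj.ne', hφ.zpow_neg_mul_eq_zero_of_pos hs₀ hs hj]

lemma philt_zero_of_gt (hφ : IsLPBump φ) {s : ℝ} (hs : 101 / 100 < s) : philt φ 0 s = 0 := by
  refine (tsum_congr fun j => ?_).trans tsum_zero
  split_ifs with hj
  · exact hφ.zpow_neg_mul_eq_zero_of_neg hs hj
  · rfl

end IsLPBump

lemma philt_eq_philt_zero (φ : ℝ → ℝ) (l : ℤ) (s : ℝ) :
    philt φ l s = philt φ 0 ((2 : ℝ) ^ (-l) * s) := by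
  unfold philt
  rw [← (Equiv.addRight l).tsum_eq]
  refine tsum_congr fun j => ?_
  rw [Equiv.coe_addRight, ← mul_assoc, ← zpow_add₀ two_ne_zero, ← neg_add]
  simp only [add_lt_iff_neg_right]

/-- The low-frequency cutoff `φ_{<0}`, extended by `1` to `s ≤ 0`. The sum defining `philt φ 0`
vanishes there, but the multiplier `φ_{<0}(|ξ|)` is smooth at the origin only with the value `1`. -/
def lowCut (φ : ℝ → ℝ) (s : ℝ) : ℝ := if 0 < s then philt φ 0 s else 1

lemma enorm2_smul {a : ℝ} (ha : 0 ≤ a) (ξ : ℝ × ℝ) : enorm2 (a • ξ) = a * enorm2 ξ := by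
  unfold enorm2
  rw [Prod.smul_fst, Prod.smul_snd, smul_eq_mul, smul_eq_mul, mul_pow, mul_pow, ← mul_add,
    Real.sqrt_mul (sq_nonneg a), Real.sqrt_sq ha]

lemma norm_le_enorm2 (ξ : ℝ × ℝ) : ‖ξ‖ ≤ enorm2 ξ :=
  max_le (Real.abs_le_sqrt (by nlinarith [sq_nonneg ξ.2]))
    (Real.abs_le_sqrt (by nlinarith [sq_nonneg ξ.1]))

lemma enorm2_pos {ξ : ℝ × ℝ} (hξ : ξ ≠ 0) : 0 < enorm2 ξ :=
  (norm_pos_iff.2 hξ).trans_le (norm_le_enorm2 ξ)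

lemma continuous_enorm2 : Continuous enorm2 := by
  unfold enorm2
  fun_prop

lemma contDiffAt_enorm2 {ξ : ℝ × ℝ} (hξ : ξ ≠ 0) {n : WithTop ℕ∞} : ContDiffAt ℝ n enorm2 ξ :=
  ContDiffAt.sqrt (by fun_prop) (Real.sqrt_pos.1 (enorm2_pos hξ)).ne'

namespace IsLPBump

variable {φ : ℝ → ℝ}

lemma lowCut_of_lt (hφ : IsLPBump φ) {s : ℝ} (hs : s < 3 / 2) : lowCut φ s = 1 - φ s := by
  unfold lowCut
  split_ifs with h
  · exact hφ.philt_zero_of_lt h hs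
  · simp [hφ.eq_zero_of_lt (show s < 999 / 1000 by linarith)]

lemma lowCut_of_gt (hφ : IsLPBump φ) {s : ℝ} (hs : 101 / 100 < s) : lowCut φ s = 0 := by
  rw [lowCut, if_pos (by linarith), hφ.philt_zero_of_gt hs]

lemma contDiff_comp_enorm2 (hφ : IsLPBump φ) : ContDiff ℝ (⊤ : ℕ∞) fun ξ => φ (enorm2 ξ) := by
  refine contDiff_iff_contDiffAt.2 fun ξ => ?_
  rcases eq_or_ne ξ 0 with rfl | hξ
  · refine (contDiffAt_const (c := (0 : ℝ))).congr_of_eventuallyEq ?_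
    filter_upwards [continuous_enorm2.continuousAt.eventually_lt_const
      (show enorm2 0 < 999 / 1000 by norm_num [enorm2])] with η hη
    exact hφ.eq_zero_of_lt hη
  · exact hφ.1.contDiffAt.comp ξ (contDiffAt_enorm2 hξ)

lemma contDiff_lowCut_enorm2 (hφ : IsLPBump φ) :
    ContDiff ℝ (⊤ : ℕ∞) fun ξ => lowCut φ (enorm2 ξ) := by
  refine contDiff_iff_contDiffAt.2 fun ξ => ?_
  rcases lt_or_ge (enorm2 ξ) (3 / 2) with hξ | hξ
  · refine (contDiffAt_const (c := (1 : ℝ))).sub hφ.contDiff_comp_enorm2.contDiffAt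
      |>.congr_of_eventuallyEq ?_
    filter_upwards [continuous_enorm2.continuousAt.eventually_lt_const hξ] with η hη
    exact hφ.lowCut_of_lt hη
  · refine (contDiffAt_const (c := (0 : ℝ))).congr_of_eventuallyEq ?_
    filter_upwards [continuous_enorm2.continuousAt.eventually_const_lt
      (show 101 / 100 < enorm2 ξ by linarith)] with η hη
    exact hφ.lowCut_of_gt hη

lemma hasCompactSupport_lowCut_enorm2 (hφ : IsLPBump φ) :
    HasCompactSupport fun ξ => lowCut φ (enorm2 ξ) := by
  refine HasCompactSupport.intro (isCompact_closedBall 0 (101 / 100)) fun ξ hξ => ?_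
  rw [mem_closedBall_zero_iff, not_le] at hξ
  exact hφ.lowCut_of_gt (hξ.trans_le (norm_le_enorm2 ξ))

/-- The multiplier `φ_{<0}(|ξ|)` of `𝒫_{<0}` as a Schwartz function. -/
def lowMultiplier (hφ : IsLPBump φ) : 𝓢(ℝ × ℝ, ℂ) :=
  HasCompactSupport.toSchwartzMap
    (hφ.hasCompactSupport_lowCut_enorm2.comp_left Complex.ofReal_zero)
    (Complex.ofRealCLM.contDiff.comp hφ.contDiff_lowCut_enorm2)

lemma philt_enorm2_eq_lowMultiplier (hφ : IsLPBump φ) (l : ℤ) {ξ : ℝ × ℝ} (hξ : ξ ≠ 0) :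
    (philt φ l (enorm2 ξ) : ℂ) = hφ.lowMultiplier ((2 : ℝ) ^ (-l) • ξ) := by
  have hpos : 0 < (2 : ℝ) ^ (-l) * enorm2 ξ := mul_pos (by positivity) (enorm2_pos hξ)
  change _ = (lowCut φ (enorm2 ((2 : ℝ) ^ (-l) • ξ)) : ℂ)
  rw [philt_eq_philt_zero, enorm2_smul (by positivity), lowCut, if_pos hpos]

end IsLPBump

/-! ### Fourier inversion -/

/-- The plane wave `e^{i x·ξ}`. -/
def planeWave (x ξ : ℝ × ℝ) : ℂ := Complex.exp (Complex.I * ((x.1 * ξ.1 + x.2 * ξ.2 : ℝ) : ℂ))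

/-- The inverse of the Fourier transform `ft2`. -/
def invFt2 (m : ℝ × ℝ → ℂ) (x : ℝ × ℝ) : ℂ :=
  (((2 * π) ^ (-2 : ℤ) : ℝ) : ℂ) * ∫ ξ, planeWave x ξ * m ξ

lemma planeWave_add (x y ξ : ℝ × ℝ) : planeWave (x + y) ξ = planeWave x ξ * planeWave y ξ := by
  unfold planeWave
  rw [← Complex.exp_add]
  congr 1
  push_cast [Prod.fst_add, Prod.snd_add]
  ring

lemma planeWave_smul (a : ℝ) (x ξ : ℝ × ℝ) : planeWave (a • x) ξ = planeWave x (a • ξ) := by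
  simp only [planeWave, Prod.smul_fst, Prod.smul_snd, smul_eq_mul]
  congr 4 <;> ring

lemma norm_planeWave (x ξ : ℝ × ℝ) : ‖planeWave x ξ‖ = 1 := by
  rw [planeWave, mul_comm]
  exact Complex.norm_exp_ofReal_mul_I _

lemma planeWave_neg_mul_self (x ξ : ℝ × ℝ) : planeWave (-x) ξ * planeWave x ξ = 1 := by
  rw [← planeWave_add, neg_add_cancel]
  simp [planeWave]

@[fun_prop]
lemma continuous_planeWave {X : Type*} [TopologicalSpace X] {u v : X → ℝ × ℝ}
    (hu : Continuous u) (hv : Continuous v) : Continuous fun a => planeWave (u a) (v a) := by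
  unfold planeWave
  fun_prop

lemma integrable_planeWave_mul {X : Type*} [TopologicalSpace X] [MeasurableSpace X]
    [OpensMeasurableSpace X] [SecondCountableTopologyEither X ℂ] {μ : Measure X}
    {F : X → ℂ} (hF : Integrable F μ) {u v : X → ℝ × ℝ} (hu : Continuous u) (hv : Continuous v) :
    Integrable (fun a => planeWave (u a) (v a) * F a) μ :=
  hF.bdd_mul (c := 1) (continuous_planeWave hu hv).aestronglyMeasurable
    (.of_forall fun _ => (norm_planeWave _ _).le)

lemma ft2_eq (g : ℝ × ℝ → ℂ) (ξ : ℝ × ℝ) : ft2 g ξ = ∫ y, planeWave (-y) ξ * g y := by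
  refine integral_congr_ae (.of_forall fun y => ?_)
  simp only [planeWave, Prod.fst_neg, Prod.snd_neg]
  congr 2
  push_cast
  ring

lemma norm_ft2_le (g : ℝ × ℝ → ℂ) (ξ : ℝ × ℝ) : ‖ft2 g ξ‖ ≤ ∫ y, ‖g y‖ := by
  rw [ft2_eq]
  refine (norm_integral_le_integral_norm _).trans_eq ?_
  simp only [norm_mul, norm_planeWave, one_mul]

lemma continuous_ft2 {g : ℝ × ℝ → ℂ} (hg : Integrable g) : Continuous (ft2 g) := by
  rw [funext (ft2_eq g)]
  refine continuous_of_dominated (bound := fun y => ‖g y‖)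
    (fun ξ => (integrable_planeWave_mul hg (by fun_prop) (by fun_prop)).1)
    (fun ξ => .of_forall fun y => ?_) hg.norm (.of_forall fun y => by fun_prop)
  rw [norm_mul, norm_planeWave, one_mul]

lemma integrable_mul_ft2 {m g : ℝ × ℝ → ℂ} (hm : Integrable m) (hg : Integrable g) :
    Integrable fun ξ => m ξ * ft2 g ξ :=
  hm.mul_bdd (c := ∫ y, ‖g y‖) (continuous_ft2 hg).aestronglyMeasurable
    (.of_forall (norm_ft2_le g))

lemma ft2_of_not_integrable {g : ℝ × ℝ → ℂ} (hg : ¬ Integrable g) : ft2 g = 0 := by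
  ext ξ
  rw [ft2_eq]
  refine integral_undef fun h => hg ?_
  refine (integrable_planeWave_mul h (u := id) (v := fun _ => ξ) (by fun_prop)
    (by fun_prop)).congr (.of_forall fun y => ?_)
  simp only [id]
  rw [← mul_assoc, mul_comm (planeWave _ _), planeWave_neg_mul_self, one_mul]

lemma integral_comp_smul_real_prod (a : ℝ) (f : ℝ × ℝ → ℂ) :
    ∫ x, f (a • x) = ((a ^ 2)⁻¹ : ℝ) * ∫ x, f x := by
  rw [Measure.integral_comp_smul, Module.finrank_prod, Module.finrank_self,
    one_add_one_eq_two, abs_of_nonneg (inv_nonneg.2 (sq_nonneg a)), Complex.real_smul]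

lemma integral_comp_complex_equivRealProdCLM (f : ℝ × ℝ → ℂ) :
    ∫ v : ℂ, f (Complex.equivRealProdCLM v) = ∫ x, f x :=
  Complex.volume_preserving_equiv_real_prod.integral_comp
    Complex.measurableEquivRealProd.measurableEmbedding f

lemma ft2_eq_fourier (f : ℝ × ℝ → ℂ) (z : ℂ) :
    ft2 f ((2 * π) • Complex.equivRealProdCLM z) = 𝓕 (f ∘ Complex.equivRealProdCLM) z := by
  rw [ft2_eq, Real.fourier_eq', ← integral_comp_complex_equivRealProdCLM]
  refine integral_congr_ae (.of_forall fun v => ?_)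
  simp only [planeWave, Complex.inner, Function.comp_apply, smul_eq_mul]
  congr 2
  simp only [Complex.equivRealProdCLM_apply, Prod.neg_mk, Prod.smul_mk, smul_eq_mul, neg_mul,
    Complex.ofReal_add, Complex.ofReal_neg, Complex.ofReal_mul, Complex.ofReal_ofNat,
    Complex.mul_re, Complex.conj_re, Complex.conj_im, mul_neg, sub_neg_eq_add]
  ring

lemma invFt2_eq_fourierInv (m : ℝ × ℝ → ℂ) (z : ℂ) :
    invFt2 m (Complex.equivRealProdCLM z) =
      𝓕⁻ (fun v : ℂ => m ((2 * π) • Complex.equivRealProdCLM v)) z := by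
  have hscale := integral_comp_smul_real_prod (2 * π)
    fun ξ => planeWave (Complex.equivRealProdCLM z) ξ * m ξ
  rw [← zpow_natCast, ← zpow_neg] at hscale
  rw [invFt2]
  refine hscale.symm.trans ?_
  rw [Real.fourierInv_eq', ← integral_comp_complex_equivRealProdCLM]
  refine integral_congr_ae (.of_forall fun v => ?_)
  simp only [planeWave, Complex.inner, smul_eq_mul]
  congr 2
  simp only [Complex.equivRealProdCLM_apply, Prod.smul_mk, smul_eq_mul, Complex.ofReal_add,
    Complex.ofReal_mul, Complex.ofReal_ofNat, Complex.mul_re, Complex.conj_re, Complex.conj_im,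
    mul_neg, sub_neg_eq_add]
  ring

/-- Precomposition of a Schwartz function with the dilation `x ↦ a • x`. -/
def dilate (a : ℝ) (ha : a ≠ 0) (m : 𝓢(ℝ × ℝ, ℂ)) : 𝓢(ℝ × ℝ, ℂ) :=
  SchwartzMap.compCLMOfContinuousLinearEquiv ℂ
    (ContinuousLinearEquiv.smulLeft (Units.mk0 a ha)) m

lemma exists_schwartzMap_eq_invFt2 (m : 𝓢(ℝ × ℝ, ℂ)) :
    ∃ S : 𝓢(ℝ × ℝ, ℂ), ⇑S = invFt2 m ∧ ft2 S = m := by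
  let e := Complex.equivRealProdCLM
  let M : 𝓢(ℂ, ℂ) :=
    SchwartzMap.compCLMOfContinuousLinearEquiv ℂ e (dilate (2 * π) (by positivity) m)
  let S := SchwartzMap.compCLMOfContinuousLinearEquiv ℂ e.symm (𝓕⁻ M)
  refine ⟨S, funext fun x => ?_, funext fun ξ => ?_⟩
  · obtain ⟨z, rfl⟩ := e.surjective x
    rw [invFt2_eq_fourierInv]
    change (𝓕⁻ M) (e.symm (e z)) = _
    rw [e.symm_apply_apply, SchwartzMap.fourierInv_coe]
    rfl
  · obtain ⟨z, rfl⟩ : ∃ z, (2 * π) • e z = ξ :=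
      ⟨e.symm ((2 * π)⁻¹ • ξ), by rw [e.apply_symm_apply, smul_inv_smul₀ (by positivity)]⟩
    have hS : ⇑S ∘ e = ⇑(𝓕⁻ M : 𝓢(ℂ, ℂ)) :=
      funext fun v => congrArg (𝓕⁻ M : 𝓢(ℂ, ℂ)) (e.symm_apply_apply v)
    rw [ft2_eq_fourier, hS, ← SchwartzMap.fourier_coe, FourierTransform.fourier_fourierInv_eq]
    rfl

lemma integrable_invFt2 (m : 𝓢(ℝ × ℝ, ℂ)) : Integrable (invFt2 m) := by
  obtain ⟨S, hS, -⟩ := exists_schwartzMap_eq_invFt2 m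
  exact hS ▸ S.integrable

lemma ft2_invFt2 (m : 𝓢(ℝ × ℝ, ℂ)) : ft2 (invFt2 m) = m := by
  obtain ⟨S, hS, hm⟩ := exists_schwartzMap_eq_invFt2 m
  exact hS ▸ hm

lemma invFt2_comp_smul {a : ℝ} (ha : a ≠ 0) (m : ℝ × ℝ → ℂ) (x : ℝ × ℝ) :
    invFt2 (fun ξ => m (a • ξ)) x = ((a ^ 2)⁻¹ : ℝ) * invFt2 m (a⁻¹ • x) := by
  have h := integral_comp_smul_real_prod a fun ξ => planeWave (a⁻¹ • x) ξ * m ξ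
  simp only [planeWave_smul, inv_smul_smul₀ ha] at h
  simp only [invFt2, h, planeWave_smul]
  ring

lemma invFt2_mul_ft2 {m g : ℝ × ℝ → ℂ} (hm : Integrable m) (hg : Integrable g) (x : ℝ × ℝ) :
    invFt2 (fun ξ => m ξ * ft2 g ξ) x = ∫ y, invFt2 m (x - y) * g y := by
  have hunfold : ∫ ξ, planeWave x ξ * (m ξ * ft2 g ξ) =
      ∫ ξ, ∫ y, planeWave (x - y) ξ * (m ξ * g y) := by
    refine integral_congr_ae (.of_forall fun ξ => ?_)
    simp only [ft2_eq]
    rw [← mul_assoc, ← integral_const_mul]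
    refine integral_congr_ae (.of_forall fun y => ?_)
    simp only [sub_eq_add_neg, planeWave_add]
    ring
  have hint : Integrable (Function.uncurry fun ξ y => planeWave (x - y) ξ * (m ξ * g y))
      (volume.prod volume) :=
    integrable_planeWave_mul (hm.mul_prod hg) (u := fun z => x - z.2) (v := fun z => z.1)
      (by fun_prop) (by fun_prop)
  rw [invFt2, hunfold, integral_integral_swap hint, ← integral_const_mul]
  refine integral_congr_ae (.of_forall fun y => ?_)
  simp only [← mul_assoc, invFt2, integral_mul_const]

lemma ft2_convolution {K g : ℝ × ℝ → ℂ} (hK : Integrable K) (hg : Integrable g) (ξ : ℝ × ℝ) :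
    ft2 (fun x => ∫ y, K (x - y) * g y) ξ = ft2 K ξ * ft2 g ξ := by
  have hunfold : ft2 (fun x => ∫ y, K (x - y) * g y) ξ =
      ∫ x, ∫ y, planeWave (-x) ξ * (g y * K (x - y)) := by
    rw [ft2_eq]
    refine integral_congr_ae (.of_forall fun x => ?_)
    simp only [← integral_const_mul, mul_comm (g _)]
  have hint : Integrable (Function.uncurry fun x y => planeWave (-x) ξ * (g y * K (x - y)))
      (volume.prod volume) :=
    integrable_planeWave_mul (hg.convolution_integrand (ContinuousLinearMap.mul ℝ ℂ) hK)
      (u := fun z : (ℝ × ℝ) × (ℝ × ℝ) => -z.1) (v := fun _ => ξ) (by fun_prop) (by fun_prop)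
  rw [hunfold, integral_integral_swap hint, ft2_eq g, ← integral_const_mul]
  refine integral_congr_ae (.of_forall fun y => ?_)
  simp only [ft2_eq K]
  rw [← integral_sub_right_eq_self (fun x => planeWave (-x) ξ * K x) y, ← integral_mul_const]
  refine integral_congr_ae (.of_forall fun x => ?_)
  simp only
  rw [show -x = -(x - y) + -y by abel, planeWave_add]
  ring

lemma ft2_invFt2_mul_ft2 (m : 𝓢(ℝ × ℝ, ℂ)) {g : ℝ × ℝ → ℂ} (hg : Integrable g) :
    ft2 (invFt2 fun ξ => m ξ * ft2 g ξ) = fun ξ => m ξ * ft2 g ξ := by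
  rw [funext (invFt2_mul_ft2 m.integrable hg)]
  ext ξ
  rw [ft2_convolution (integrable_invFt2 m) hg, ft2_invFt2]

/-! ### The operator `𝒜_t` as a circular average -/

lemma sigmaHat_eq (ξ : ℝ × ℝ) :
    sigmaHat ξ = ∫ θ in Ioc 0 (2 * π), planeWave (-(Real.cos θ, Real.sin θ)) ξ := by
  refine integral_congr_ae (.of_forall fun θ => ?_)
  simp only [planeWave, Prod.fst_neg, Prod.snd_neg]
  congr 1
  push_cast
  ring

lemma invFt2_sigmaHat_smul_mul {m : ℝ × ℝ → ℂ} (hm : Integrable m) (a : ℝ) (x : ℝ × ℝ) :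
    invFt2 (fun ξ => sigmaHat (a • ξ) * m ξ) x =
      ∫ θ in Ioc 0 (2 * π), invFt2 m (x - a • (Real.cos θ, Real.sin θ)) := by
  have hunfold : ∫ ξ, planeWave x ξ * (sigmaHat (a • ξ) * m ξ) =
      ∫ ξ, ∫ θ in Ioc 0 (2 * π), planeWave (x - a • (Real.cos θ, Real.sin θ)) ξ * m ξ := by
    refine integral_congr_ae (.of_forall fun ξ => ?_)
    simp only [sigmaHat_eq]
    rw [← mul_assoc, ← integral_const_mul, ← integral_mul_const]
    refine integral_congr_ae (.of_forall fun θ => ?_)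
    simp only [sub_eq_add_neg, planeWave_add, ← smul_neg, planeWave_smul]
  have hint : Integrable (Function.uncurry fun (ξ : ℝ × ℝ) (θ : ℝ) =>
      planeWave (x - a • (Real.cos θ, Real.sin θ)) ξ * m ξ)
      (volume.prod (volume.restrict (Ioc 0 (2 * π)))) :=
    integrable_planeWave_mul (hm.comp_fst _)
      (u := fun z : (ℝ × ℝ) × ℝ => x - a • (Real.cos z.2, Real.sin z.2)) (v := fun z => z.1)
      (by fun_prop) (by fun_prop)
  rw [invFt2, hunfold, integral_integral_swap hint, ← integral_const_mul]
  rfl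

lemma Aop_eq_invFt2 (g : ℝ × ℝ → ℂ) (t r x₃ : ℝ) :
    Aop g t r x₃ =
      invFt2 (fun ξ => sigmaHat ((t * r) • ξ) * ft2 g ξ) ((r ^ 2 + t ^ 2) / 2, x₃) := by
  simp only [invFt2, ← mul_assoc]
  rfl

lemma Aop_invFt2_mul_ft2 (m : 𝓢(ℝ × ℝ, ℂ)) {g : ℝ × ℝ → ℂ} (hg : Integrable g) (t r x₃ : ℝ) :
    Aop (invFt2 fun ξ => m ξ * ft2 g ξ) t r x₃ = ∫ θ in Ioc 0 (2 * π), ∫ y,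
      invFt2 m (((r ^ 2 + t ^ 2) / 2, x₃) - (t * r) • (Real.cos θ, Real.sin θ) - y) * g y := by
  simp only [Aop_eq_invFt2, ft2_invFt2_mul_ft2 m hg,
    invFt2_sigmaHat_smul_mul (integrable_mul_ft2 m.integrable hg),
    invFt2_mul_ft2 m.integrable hg]

lemma IsLPBump.projLt_eq_invFt2 {φ : ℝ → ℝ} (hφ : IsLPBump φ) (l : ℤ) (g : ℝ × ℝ → ℂ) :
    projLt φ l g = invFt2 fun ξ => hφ.lowMultiplier ((2 : ℝ) ^ (-l) • ξ) * ft2 g ξ := by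
  ext x
  refine congrArg _ (integral_congr_ae ?_)
  filter_upwards [Measure.ae_ne volume (0 : ℝ × ℝ)] with ξ hξ
  rw [hφ.philt_enorm2_eq_lowMultiplier l hξ, mul_assoc]
  rfl

/-! ### Averages of local `L^p` norms -/

section WeightedLp

variable {X Y E : Type*} [MeasurableSpace X] [MeasurableSpace Y] [NormedAddCommGroup E]
  {μ : Measure X} {ν : Measure Y} {p q : ℝ≥0∞}

lemma eLpNorm_withDensity_rpow {w : Y → ℝ≥0∞} (hw : AEMeasurable w ν) {g : Y → E}
    (hg : AEStronglyMeasurable g ν) (hp₀ : p ≠ 0) (hp : p ≠ ∞) :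
    eLpNorm g p (ν.withDensity w) ^ p.toReal = ∫⁻ y, w y * ‖g y‖ₑ ^ p.toReal ∂ν := by
  rw [eLpNorm_eq_eLpNorm' hp₀ hp,
    ← lintegral_rpow_enorm_eq_rpow_eLpNorm' (ENNReal.toReal_pos hp₀ hp),
    lintegral_withDensity_eq_lintegral_mul₀ hw (hg.enorm.pow_const _)]
  rfl

lemma eLpNorm_withDensity_le {w : Y → ℝ≥0∞} {a : ℝ≥0∞} (ha : a ≠ 0) (hwa : ∀ y, w y ≤ a)
    (g : Y → E) : eLpNorm g p (ν.withDensity w) ≤ a ^ (1 / p).toReal * eLpNorm g p ν := by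
  have hle : ν.withDensity w ≤ a • ν :=
    (withDensity_mono (.of_forall hwa)).trans_eq (withDensity_const a)
  exact (eLpNorm_mono_measure g hle).trans_eq (eLpNorm_smul_measure_of_ne_zero ha g p ν)

lemma lintegral_mul_enorm_le_eLpNorm_withDensity {w : Y → ℝ≥0∞} (hw : AEMeasurable w ν)
    (hw₁ : ∫⁻ y, w y ∂ν = 1) {g : Y → E} (hg : AEStronglyMeasurable g ν) (hp : 1 ≤ p) :
    ∫⁻ y, w y * ‖g y‖ₑ ∂ν ≤ eLpNorm g p (ν.withDensity w) := by
  have : IsProbabilityMeasure (ν.withDensity w) := ⟨by simpa using hw₁⟩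
  calc ∫⁻ y, w y * ‖g y‖ₑ ∂ν = eLpNorm g 1 (ν.withDensity w) := by
        simpa using (eLpNorm_withDensity_rpow hw hg one_ne_zero ENNReal.one_ne_top).symm
    _ ≤ eLpNorm g p (ν.withDensity w) :=
        eLpNorm_le_eLpNorm_of_exponent_le hp (hg.mono_ac (withDensity_absolutelyContinuous _ _))

lemma eLpNorm_le_rpow_mul_eLpNorm_rpow {ε : Type*} [TopologicalSpace ε] [ContinuousENorm ε]
    {f : X → ε} {S : ℝ≥0∞} (hS : S ≠ ∞) (hf : ∀ x, ‖f x‖ₑ ≤ S) (hp : p ≠ 0) (hpq : p ≤ q) :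
    eLpNorm f q μ ≤
      S ^ (1 - p.toReal / q.toReal) * eLpNorm f p μ ^ (p.toReal / q.toReal) := by
  rcases eq_or_ne q ∞ with rfl | hq
  · simpa using eLpNormEssSup_le_of_ae_enorm_bound (.of_forall hf)
  have hP : 0 < p.toReal := ENNReal.toReal_pos hp (hpq.trans_lt hq.lt_top).ne
  have hPQ : p.toReal ≤ q.toReal := ENNReal.toReal_mono hq hpq
  have hQ : 0 < q.toReal := hP.trans_le hPQ
  have hpow (x : X) : ‖f x‖ₑ ^ q.toReal ≤ S ^ (q.toReal - p.toReal) * ‖f x‖ₑ ^ p.toReal := by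
    grw [← hf x, ← ENNReal.rpow_add_of_nonneg _ _ (sub_nonneg.2 hPQ) hP.le, sub_add_cancel]
    exact sub_nonneg.2 hPQ
  have hint : ∫⁻ x, ‖f x‖ₑ ^ q.toReal ∂μ ≤
      S ^ (q.toReal - p.toReal) * ∫⁻ x, ‖f x‖ₑ ^ p.toReal ∂μ :=
    (lintegral_mono hpow).trans_eq (lintegral_const_mul' _ _
      (ENNReal.rpow_ne_top_of_nonneg (sub_nonneg.2 hPQ) hS))
  rw [eLpNorm_eq_lintegral_rpow_enorm_toReal (hp.bot_lt.trans_le hpq).ne' hq,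
    eLpNorm_eq_lintegral_rpow_enorm_toReal hp (hpq.trans_lt hq.lt_top).ne]
  grw [hint]
  rw [ENNReal.mul_rpow_of_nonneg _ _ (by positivity), ← ENNReal.rpow_mul, ← ENNReal.rpow_mul]
  apply le_of_eq
  congr 2 <;> field_simp

lemma eLpNorm_eLpNorm_withDensity_le_of_exponent_eq [SFinite μ] [SFinite ν]
    {w : X → Y → ℝ≥0∞} (hw : Measurable (Function.uncurry w)) {b : ℝ≥0∞}
    (hb : ∀ y, ∫⁻ x, w x y ∂μ ≤ b) {g : Y → E} (hg : AEStronglyMeasurable g ν) (hp₀ : p ≠ 0) :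
    eLpNorm (fun x => eLpNorm g p (ν.withDensity (w x))) p μ ≤
      b ^ (1 / p).toReal * eLpNorm g p ν := by
  rcases eq_or_ne p ∞ with rfl | hp
  · simpa using eLpNormEssSup_le_of_ae_enorm_bound (.of_forall fun x =>
      eLpNormEssSup_mono_measure g (withDensity_absolutelyContinuous ν (w x)))
  have hP : 0 < p.toReal := ENNReal.toReal_pos hp₀ hp
  have hwg : AEMeasurable (fun z : X × Y => w z.1 z.2 * ‖g z.2‖ₑ ^ p.toReal) (μ.prod ν) :=
    hw.aemeasurable.mul (hg.enorm.pow_const _).comp_snd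
  have hint : ∫⁻ x, eLpNorm g p (ν.withDensity (w x)) ^ p.toReal ∂μ ≤
      b * eLpNorm g p ν ^ p.toReal := by
    calc ∫⁻ x, eLpNorm g p (ν.withDensity (w x)) ^ p.toReal ∂μ
        = ∫⁻ x, ∫⁻ y, w x y * ‖g y‖ₑ ^ p.toReal ∂ν ∂μ := by
          simp only [eLpNorm_withDensity_rpow hw.of_uncurry_left.aemeasurable hg hp₀ hp]
      _ = ∫⁻ y, (∫⁻ x, w x y ∂μ) * ‖g y‖ₑ ^ p.toReal ∂ν := by
          rw [lintegral_lintegral_swap hwg]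
          simp only [lintegral_mul_const _ hw.of_uncurry_right]
      _ ≤ ∫⁻ y, b * ‖g y‖ₑ ^ p.toReal ∂ν := by
          gcongr with y
          exact hb y
      _ = b * eLpNorm g p ν ^ p.toReal := by
          rw [lintegral_const_mul'' _ (hg.enorm.pow_const _), eLpNorm_eq_eLpNorm' hp₀ hp,
            lintegral_rpow_enorm_eq_rpow_eLpNorm' hP]
  rw [eLpNorm_eq_lintegral_rpow_enorm_toReal hp₀ hp]
  simp only [enorm_eq_self]
  grw [hint]
  rw [ENNReal.mul_rpow_of_nonneg _ _ (by positivity), ← ENNReal.rpow_mul,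
    mul_one_div_cancel hP.ne', ENNReal.rpow_one, ENNReal.toReal_div, ENNReal.toReal_one]

lemma one_div_toReal_le_one (hp : 1 ≤ p) : (1 / p).toReal ≤ 1 := by
  simpa using ENNReal.toReal_mono ENNReal.one_ne_top (ENNReal.inv_le_one.2 hp)

lemma one_div_toReal_mul_div_toReal (hp : p ≠ 0) (hpq : p ≤ q) :
    (1 / p).toReal * (p.toReal / q.toReal) = (1 / q).toReal := by
  rcases eq_or_ne p ∞ with rfl | hp'
  · simp [top_le_iff.1 hpq]
  · have hP := (ENNReal.toReal_pos hp hp').ne'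
    rw [ENNReal.toReal_div, ENNReal.toReal_div, ENNReal.toReal_one]
    field_simp

lemma eLpNorm_eLpNorm_withDensity_le [SFinite μ] [SFinite ν]
    {w : X → Y → ℝ≥0∞} (hw : Measurable (Function.uncurry w)) {a b : ℝ≥0∞} (ha : a ≠ 0)
    (ha' : a ≠ ∞) (hwa : ∀ x y, w x y ≤ a) (hb : ∀ y, ∫⁻ x, w x y ∂μ ≤ b) {g : Y → E}
    (hg : MemLp g p ν) (hp : p ≠ 0) (hpq : p ≤ q) :
    eLpNorm (fun x => eLpNorm g p (ν.withDensity (w x))) q μ ≤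
      a ^ ((1 / p).toReal - (1 / q).toReal) * b ^ (1 / q).toReal * eLpNorm g p ν := by
  set s := p.toReal / q.toReal
  have hs₀ : 0 ≤ s := by positivity
  have hs₁ : 0 ≤ 1 - s := by
    rcases eq_or_ne q ∞ with rfl | hq
    · simp [s]
    · exact sub_nonneg.2 (div_le_one_of_le₀ (ENNReal.toReal_mono hq hpq) ENNReal.toReal_nonneg)
  have hexp := one_div_toReal_mul_div_toReal hp hpq
  calc eLpNorm (fun x => eLpNorm g p (ν.withDensity (w x))) q μ
      ≤ (a ^ (1 / p).toReal * eLpNorm g p ν) ^ (1 - s) *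
          eLpNorm (fun x => eLpNorm g p (ν.withDensity (w x))) p μ ^ s :=
        eLpNorm_le_rpow_mul_eLpNorm_rpow
          (ENNReal.mul_ne_top (ENNReal.rpow_ne_top_of_nonneg ENNReal.toReal_nonneg ha') hg.2.ne)
          (fun x => eLpNorm_withDensity_le ha (hwa x) g) hp hpq
    _ ≤ (a ^ (1 / p).toReal * eLpNorm g p ν) ^ (1 - s) *
          (b ^ (1 / p).toReal * eLpNorm g p ν) ^ s := by
        gcongr
        exact eLpNorm_eLpNorm_withDensity_le_of_exponent_eq hw hb hg.1 hp
    _ = a ^ ((1 / p).toReal - (1 / q).toReal) * b ^ (1 / q).toReal *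
          (eLpNorm g p ν ^ (1 - s) * eLpNorm g p ν ^ s) := by
        rw [ENNReal.mul_rpow_of_nonneg _ _ hs₁, ENNReal.mul_rpow_of_nonneg _ _ hs₀,
          ← ENNReal.rpow_mul, ← ENNReal.rpow_mul, mul_sub, mul_one, hexp]
        ring
    _ = _ := by
        rw [← ENNReal.rpow_add_of_nonneg _ _ hs₁ hs₀, sub_add_cancel, ENNReal.rpow_one]

end WeightedLp

/-! ### Cauchy densities -/

lemma cauchyPDF_comm (x y : ℝ) (γ : ℝ≥0) : cauchyPDF x γ y = cauchyPDF y γ x := by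
  rw [cauchyPDF, cauchyPDF, cauchyPDFReal, cauchyPDFReal, ← neg_sub, neg_sq]

lemma cauchyPDF_eq_inv_mul (x y : ℝ) (γ : ℝ≥0) :
    cauchyPDF x γ y = ↑γ⁻¹ * cauchyPDF 0 1 ((γ : ℝ)⁻¹ * (x - y)) := by
  rw [cauchyPDF_comm, cauchyPDF, cauchyPDF, ← ENNReal.ofReal_coe_nnreal,
    ← ENNReal.ofReal_mul (by positivity), cauchyPDFReal_def', cauchyPDFReal_def']
  congr 1
  simp only [NNReal.coe_inv, NNReal.coe_one, div_eq_inv_mul, inv_one, sub_zero, one_mul, mul_one]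
  ring

lemma cauchyPDF_zero_one_le (x : ℝ) : cauchyPDF 0 1 x ≤ 1 := by
  rw [cauchyPDF, ENNReal.ofReal_le_one, cauchyPDFReal_def']
  simp only [NNReal.coe_one, inv_one, mul_one]
  exact mul_le_one₀ (inv_le_one_of_one_le₀ (by linarith [Real.two_le_pi])) (by positivity)
    (inv_le_one_of_one_le₀ (by nlinarith [sq_nonneg ((x - 0) / 1)]))

lemma cauchyPDF_le_inv (x y : ℝ) (γ : ℝ≥0) : cauchyPDF x γ y ≤ ↑γ⁻¹ := by
  rw [cauchyPDF_eq_inv_mul]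
  exact mul_le_of_le_one_right' (cauchyPDF_zero_one_le _)

lemma cauchyPDF_le_of_abs_sub_le {x x' M : ℝ} {γ : ℝ≥0} (h : |x - x'| ≤ M * γ) (y : ℝ) :
    cauchyPDF x γ y ≤ ENNReal.ofReal (2 * (1 + M ^ 2)) * cauchyPDF x' γ y := by
  rcases eq_or_ne γ 0 with rfl | hγ
  · simp
  have hγ' : 0 < (γ : ℝ) := by positivity
  have huv : |(y - x') / γ - (y - x) / γ| ≤ M := by
    rw [← sub_div, sub_sub_sub_cancel_left, abs_div, abs_of_pos hγ']
    exact (div_le_iff₀ hγ').2 h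
  rw [cauchyPDF, cauchyPDF, ← ENNReal.ofReal_mul (by positivity), cauchyPDFReal_def',
    cauchyPDFReal_def', mul_left_comm]
  set u := (y - x) / γ
  set v := (y - x') / γ
  gcongr
  rw [← div_eq_mul_inv, inv_eq_one_div, div_le_div_iff₀ (by positivity) (by positivity), one_mul]
  nlinarith [sq_le_sq' (abs_le.1 huv).1 (abs_le.1 huv).2, sq_nonneg (u - (v - u)),
    sq_nonneg (M * u)]

@[fun_prop]
lemma measurable_cauchyPDF_comp {X : Type*} [MeasurableSpace X] {u v : X → ℝ} (hu : Measurable u)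
    (hv : Measurable v) (γ : ℝ≥0) : Measurable fun a => cauchyPDF (u a) γ (v a) := by
  unfold cauchyPDF cauchyPDFReal
  fun_prop

lemma lintegral_cauchyPDF_mul_cauchyPDF {γ : ℝ≥0} (hγ : γ ≠ 0) (X : ℝ × ℝ) :
    ∫⁻ y : ℝ × ℝ, cauchyPDF X.1 γ y.1 * cauchyPDF X.2 γ y.2 = 1 := by
  rw [Measure.volume_eq_prod, lintegral_prod_mul (by fun_prop) (by fun_prop),
    lintegral_cauchyPDF_eq_one _ hγ, lintegral_cauchyPDF_eq_one _ hγ, one_mul]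

/-! ### Kernels dominated by Cauchy densities -/

lemma exists_enorm_le_cauchyPDF_mul_cauchyPDF (f : 𝓢(ℝ × ℝ, ℂ)) :
    ∃ C : ℝ≥0, ∀ x, ‖f x‖ₑ ≤ C * (cauchyPDF 0 1 x.1 * cauchyPDF 0 1 x.2) := by
  obtain ⟨C, hC⟩ : ∃ C : ℝ, ∀ x, (1 + ‖x‖) ^ 4 * ‖f x‖ ≤ C := ⟨_, fun x => by
    simpa using f.one_add_le_sup_seminorm_apply (𝕜 := ℝ) (m := (4, 0)) le_rfl le_rfl x⟩
  refine ⟨(π ^ 2 * C).toNNReal, fun x => ?_⟩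
  have hsq {u : ℝ} (hu : |u| ≤ ‖x‖) : 1 + u ^ 2 ≤ (1 + ‖x‖) ^ 2 := by
    nlinarith [sq_le_sq' (abs_le.1 hu).1 (abs_le.1 hu).2, norm_nonneg x]
  have hprod : (1 + x.1 ^ 2) * (1 + x.2 ^ 2) * ‖f x‖ ≤ C := by
    refine le_trans ?_ (hC x)
    calc (1 + x.1 ^ 2) * (1 + x.2 ^ 2) * ‖f x‖ ≤ (1 + ‖x‖) ^ 2 * (1 + ‖x‖) ^ 2 * ‖f x‖ := by
          gcongr
          exacts [hsq (norm_fst_le x), hsq (norm_snd_le x)]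
      _ = (1 + ‖x‖) ^ 4 * ‖f x‖ := by ring
  have hC₀ : 0 ≤ C := le_trans (by positivity) (hC 0)
  rw [cauchyPDF, cauchyPDF, cauchyPDFReal_def', cauchyPDFReal_def', ← ENNReal.ofReal_mul
    (by positivity), ← ENNReal.ofReal_coe_nnreal, Real.coe_toNNReal _ (by positivity),
    ← ENNReal.ofReal_mul (by positivity), ← ofReal_norm]
  refine ENNReal.ofReal_le_ofReal ?_
  simp only [NNReal.coe_one, inv_one, mul_one, sub_zero, div_one]
  calc ‖f x‖ ≤ C / ((1 + x.1 ^ 2) * (1 + x.2 ^ 2)) := by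
        rwa [le_div_iff₀ (by positivity), mul_comm]
    _ = _ := by field_simp

lemma exists_enorm_invFt2_dilate_le (m : 𝓢(ℝ × ℝ, ℂ)) :
    ∃ C : ℝ≥0, ∀ (γ : ℝ≥0) (hγ : (γ : ℝ) ≠ 0) (x y : ℝ × ℝ),
      ‖invFt2 (dilate γ hγ m) (x - y)‖ₑ ≤ C * (cauchyPDF x.1 γ y.1 * cauchyPDF x.2 γ y.2) := by
  obtain ⟨S, hS, -⟩ := exists_schwartzMap_eq_invFt2 m
  obtain ⟨C, hC⟩ := exists_enorm_le_cauchyPDF_mul_cauchyPDF S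
  refine ⟨C, fun γ hγ x y => ?_⟩
  have hscale : invFt2 (dilate γ hγ m) (x - y) =
      ((γ ^ 2)⁻¹ : ℝ) * S ((γ : ℝ)⁻¹ • (x - y)) := by
    rw [hS]
    exact invFt2_comp_smul hγ m (x - y)
  have hnorm : ‖(((γ ^ 2)⁻¹ : ℝ) : ℂ)‖ₑ = (↑γ⁻¹ : ℝ≥0∞) * ↑γ⁻¹ := by
    rw [← ofReal_norm, Complex.norm_real, Real.norm_of_nonneg (by positivity), ← ENNReal.coe_mul,
      ← ENNReal.ofReal_coe_nnreal]
    congr 1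
    push_cast
    ring
  rw [hscale, enorm_mul, hnorm]
  grw [hC]
  refine le_of_eq ?_
  simp only [Prod.smul_fst, Prod.smul_snd, smul_eq_mul, Prod.fst_sub, Prod.snd_sub]
  rw [cauchyPDF_eq_inv_mul x.1, cauchyPDF_eq_inv_mul x.2]
  ring

/-- Lebesgue measure on `ℝ²` localised to the strip `|y₂ - x| ≲ γ`. Its density dominates
`cauchyPDF x₁ γ y₁ * cauchyPDF x γ y₂` for every `x₁`, so that `L^p` norms with respect to it
control the averages of a function at scale `γ` around all points of the line `y₂ = x` at once. -/
def stripMeasure (γ : ℝ≥0) (x : ℝ) : Measure (ℝ × ℝ) :=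
  volume.withDensity fun y => ↑γ⁻¹ * cauchyPDF x γ y.2

section StripMeasure

variable {γ : ℝ≥0} {p q : ℝ≥0∞}

lemma stripMeasure_le_of_abs_sub_le {x x' M : ℝ} (h : |x - x'| ≤ M * γ) :
    stripMeasure γ x ≤ ENNReal.ofReal (2 * (1 + M ^ 2)) • stripMeasure γ x' := by
  rw [stripMeasure, stripMeasure, ← withDensity_smul _ (by fun_prop)]
  refine withDensity_mono (.of_forall fun y => ?_)
  simp only [Pi.smul_apply, smul_eq_mul]
  rw [mul_left_comm]
  gcongr
  exact cauchyPDF_le_of_abs_sub_le h y.2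

lemma eLpNorm_stripMeasure_le_of_abs_sub_le {E : Type*} [NormedAddCommGroup E] (hp : 1 ≤ p)
    {x x' M : ℝ} (h : |x - x'| ≤ M * γ) (g : ℝ × ℝ → E) :
    eLpNorm g p (stripMeasure γ x) ≤
      ENNReal.ofReal (2 * (1 + M ^ 2)) * eLpNorm g p (stripMeasure γ x') := by
  have hD : 1 ≤ ENNReal.ofReal (2 * (1 + M ^ 2)) :=
    ENNReal.one_le_ofReal.2 (by nlinarith [sq_nonneg M])
  calc eLpNorm g p (stripMeasure γ x)
      ≤ eLpNorm g p (ENNReal.ofReal (2 * (1 + M ^ 2)) • stripMeasure γ x') :=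
        eLpNorm_mono_measure g (stripMeasure_le_of_abs_sub_le h)
    _ = ENNReal.ofReal (2 * (1 + M ^ 2)) ^ (1 / p).toReal *
          eLpNorm g p (stripMeasure γ x') :=
        eLpNorm_smul_measure_of_ne_zero (zero_lt_one.trans_le hD).ne' g p _
    _ ≤ _ := by
        gcongr
        exact (ENNReal.rpow_le_rpow_of_exponent_le hD (one_div_toReal_le_one hp)).trans_eq
          (ENNReal.rpow_one _)

lemma lintegral_cauchyPDF_mul_enorm_le {E : Type*} [NormedAddCommGroup E] (hγ : γ ≠ 0)
    (hp : 1 ≤ p) {g : ℝ × ℝ → E} (hg : AEStronglyMeasurable g) (x : ℝ × ℝ) :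
    ∫⁻ y, cauchyPDF x.1 γ y.1 * cauchyPDF x.2 γ y.2 * ‖g y‖ₑ ≤
      eLpNorm g p (stripMeasure γ x.2) := by
  grw [lintegral_mul_enorm_le_eLpNorm_withDensity (by fun_prop)
    (lintegral_cauchyPDF_mul_cauchyPDF hγ x) hg hp]
  refine eLpNorm_mono_measure g (withDensity_mono (.of_forall fun y => ?_))
  exact mul_le_mul_left (cauchyPDF_le_inv _ _ _) _

/-! ### The maximal estimate -/

lemma enorm_Aop_invFt2_mul_ft2_le {m : 𝓢(ℝ × ℝ, ℂ)} {C : ℝ≥0} (hγ : γ ≠ 0)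
    (hm : ∀ x y : ℝ × ℝ,
      ‖invFt2 m (x - y)‖ₑ ≤ C * (cauchyPDF x.1 γ y.1 * cauchyPDF x.2 γ y.2))
    (hp : 1 ≤ p) {g : ℝ × ℝ → ℂ} (hg : Integrable g) {t r M : ℝ} (htr : |t * r| ≤ M * γ)
    (x₃ : ℝ) :
    ‖Aop (invFt2 fun ξ => m ξ * ft2 g ξ) t r x₃‖ₑ ≤
      C * ENNReal.ofReal (2 * (1 + M ^ 2)) * ENNReal.ofReal (2 * π) *
        eLpNorm g p (stripMeasure γ x₃) := by
  have hpoint (θ : ℝ) (x : ℝ × ℝ) (hx : x.2 = x₃ - t * r * Real.sin θ) :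
      ‖∫ y, invFt2 m (x - y) * g y‖ₑ ≤
        C * ENNReal.ofReal (2 * (1 + M ^ 2)) * eLpNorm g p (stripMeasure γ x₃) := by
    have hdist : |x.2 - x₃| ≤ M * γ := by
      rw [hx, sub_sub_cancel_left, abs_neg, abs_mul]
      exact (mul_le_of_le_one_right (abs_nonneg _) (Real.abs_sin_le_one θ)).trans htr
    calc ‖∫ y, invFt2 m (x - y) * g y‖ₑ
        ≤ ∫⁻ y, C * (cauchyPDF x.1 γ y.1 * cauchyPDF x.2 γ y.2 * ‖g y‖ₑ) := by
          refine (enorm_integral_le_lintegral_enorm _).trans (lintegral_mono fun y => ?_)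
          rw [enorm_mul, ← mul_assoc]
          gcongr
          exact hm x y
      _ ≤ C * (ENNReal.ofReal (2 * (1 + M ^ 2)) * eLpNorm g p (stripMeasure γ x₃)) := by
          rw [lintegral_const_mul' _ _ ENNReal.coe_ne_top]
          gcongr
          exact (lintegral_cauchyPDF_mul_enorm_le hγ hp hg.1 x).trans
            (eLpNorm_stripMeasure_le_of_abs_sub_le hp hdist g)
      _ = _ := (mul_assoc _ _ _).symm
  rw [Aop_invFt2_mul_ft2 m hg]
  grw [enorm_integral_le_lintegral_enorm, lintegral_mono fun θ => hpoint θ _ (by simp)]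
  rw [setLIntegral_const, Real.volume_Ioc, sub_zero, mul_right_comm]

lemma eLpNorm_eLpNorm_stripMeasure_le {E : Type*} [NormedAddCommGroup E] (hγ : γ ≠ 0) (hp : p ≠ 0)
    (hpq : p ≤ q) {g : ℝ × ℝ → E} (hg : MemLp g p) (R : ℝ≥0) :
    eLpNorm (fun z : ℝ × ℝ => eLpNorm g p (stripMeasure γ z.2)) q
        (volume.restrict (Icc 0 (R * γ : ℝ) ×ˢ univ)) ≤
      (γ : ℝ≥0∞) ^ (2 * (1 / q).toReal - 2 * (1 / p).toReal) * R ^ (1 / q).toReal *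
        eLpNorm g p volume := by
  have hint (y : ℝ × ℝ) :
      ∫⁻ z in Icc 0 (R * γ : ℝ) ×ˢ univ, ↑γ⁻¹ * cauchyPDF z.2 γ y.2 = R := by
    rw [Measure.volume_eq_prod, ← Measure.prod_restrict, Measure.restrict_univ,
      lintegral_prod_mul (f := fun _ => (↑γ⁻¹ : ℝ≥0∞))
        (g := fun s => cauchyPDF s γ y.2) (by fun_prop) (by fun_prop)]
    simp only [cauchyPDF_comm _ y.2, lintegral_cauchyPDF_eq_one _ hγ, setLIntegral_const,
      Real.volume_Icc, sub_zero, mul_one]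
    rw [← NNReal.coe_mul, ENNReal.ofReal_coe_nnreal, ← ENNReal.coe_mul, mul_left_comm,
      inv_mul_cancel₀ hγ, mul_one]
  have hbound (z y : ℝ × ℝ) : ↑γ⁻¹ * cauchyPDF z.2 γ y.2 ≤ (γ : ℝ≥0∞) ^ (-2 : ℝ) := by
    calc ↑γ⁻¹ * cauchyPDF z.2 γ y.2 ≤ ↑γ⁻¹ * ↑γ⁻¹ := by
          gcongr
          exact cauchyPDF_le_inv _ _ _
      _ = (γ : ℝ≥0∞) ^ (-2 : ℝ) := by
          rw [ENNReal.coe_inv hγ, ENNReal.rpow_neg, ENNReal.rpow_two, sq,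
            ENNReal.mul_inv (.inr ENNReal.coe_ne_top) (.inl ENNReal.coe_ne_top)]
  refine (eLpNorm_eLpNorm_withDensity_le (by fun_prop)
    (ENNReal.rpow_pos (by positivity) ENNReal.coe_ne_top).ne'
    (ENNReal.rpow_ne_top_of_ne_zero (by positivity) ENNReal.coe_ne_top) hbound
    (fun y => (hint y).le) hg hp hpq).trans_eq ?_
  rw [← ENNReal.rpow_mul]
  ring_nf

lemma enorm_biSup_norm_le {ι F : Type*} [NormedAddCommGroup F] (S : Set ι) (f : ι → F)
    {B : ℝ≥0∞} (h : ∀ t ∈ S, ‖f t‖ₑ ≤ B) : ‖⨆ t ∈ S, ‖f t‖‖ₑ ≤ B := by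
  rcases eq_or_ne B ∞ with rfl | hB
  · exact le_top
  have hle : ⨆ t ∈ S, ‖f t‖ ≤ B.toReal :=
    Real.iSup_le (fun t => Real.iSup_le (fun ht => toReal_enorm (f t) ▸
      ENNReal.toReal_mono hB (h t ht)) ENNReal.toReal_nonneg) ENNReal.toReal_nonneg
  rw [Real.enorm_of_nonneg (Real.iSup_nonneg fun t => Real.iSup_nonneg fun _ => norm_nonneg _)]
  exact ENNReal.ofReal_le_of_le_toReal hle

lemma eLpNorm_le_of_enorm_le_eLpNorm_stripMeasure {E : Type*} [NormedAddCommGroup E] (hγ : γ ≠ 0)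
    (hp : 1 ≤ p) (hpq : p ≤ q) {g : ℝ × ℝ → E} (hg : MemLp g p) {F : ℝ × ℝ → ℝ} {A R : ℝ≥0}
    (hsupp : F.support ⊆ Icc 0 (R * γ : ℝ) ×ˢ univ)
    (hF : ∀ z, z.1 ∈ Icc 0 (R * γ : ℝ) → ‖F z‖ₑ ≤ A * eLpNorm g p (stripMeasure γ z.2)) :
    eLpNorm (fun z => z.1 ^ (1 / q).toReal * F z) q volume ≤
      A * (R ^ 2 : ℝ≥0∞) ^ (1 / q).toReal *
        (γ : ℝ≥0∞) ^ (3 * (1 / q).toReal - 2 * (1 / p).toReal) * eLpNorm g p volume := by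
  have hp₀ : p ≠ 0 := (zero_lt_one.trans_le hp).ne'
  have hγ₀ : (γ : ℝ≥0∞) ≠ 0 := by simpa using hγ
  have hσ : 0 ≤ (1 / q).toReal := ENNReal.toReal_nonneg
  set σ := (1 / q).toReal
  have hradial (z : ℝ × ℝ) (hz : z.1 ∈ Icc 0 (R * γ : ℝ)) :
      ‖z.1 ^ σ‖ₑ ≤ ((R * γ) ^ σ : ℝ≥0) := by
    rw [Real.enorm_of_nonneg (Real.rpow_nonneg hz.1 _), ← ENNReal.ofReal_coe_nnreal,
      NNReal.coe_rpow, NNReal.coe_mul]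
    exact ENNReal.ofReal_le_ofReal (Real.rpow_le_rpow hz.1 hz.2 hσ)
  rw [← eLpNorm_restrict_eq_of_support_subset
    ((Function.support_mul_subset_right _ _).trans hsupp)]
  calc eLpNorm (fun z => z.1 ^ σ * F z) q (volume.restrict (Icc 0 (R * γ : ℝ) ×ˢ univ))
      ≤ ((R * γ) ^ σ * A : ℝ≥0) *
          eLpNorm (fun z : ℝ × ℝ => eLpNorm g p (stripMeasure γ z.2)) q
            (volume.restrict (Icc 0 (R * γ : ℝ) ×ˢ univ)) := by
        refine eLpNorm_le_mul_eLpNorm_of_ae_le_mul' (ae_restrict_of_forall_mem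
          (measurableSet_Icc.prod .univ) fun z hz => ?_) q
        rw [enorm_mul, enorm_eq_self, ENNReal.coe_mul, mul_assoc]
        exact mul_le_mul' (hradial z hz.1) (hF z hz.1)
    _ ≤ ((R * γ) ^ σ * A : ℝ≥0) * ((γ : ℝ≥0∞) ^ (2 * σ - 2 * (1 / p).toReal) * R ^ σ *
          eLpNorm g p volume) := by
        gcongr
        exact eLpNorm_eLpNorm_stripMeasure_le hγ hp₀ hpq hg R
    _ = A * (R ^ 2 : ℝ≥0∞) ^ σ * ((γ : ℝ≥0∞) ^ σ *
          (γ : ℝ≥0∞) ^ (2 * σ - 2 * (1 / p).toReal)) * eLpNorm g p volume := by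
        rw [ENNReal.coe_mul, ENNReal.coe_rpow_of_nonneg _ hσ, ENNReal.coe_mul,
          ENNReal.mul_rpow_of_nonneg _ _ hσ, sq, ENNReal.mul_rpow_of_nonneg _ _ hσ]
        ring
    _ = _ := by
        rw [← ENNReal.rpow_add _ _ hγ₀ ENNReal.coe_ne_top]
        ring_nf

end StripMeasure

lemma exists_eLpNorm_maximal_Aop_le (m : 𝓢(ℝ × ℝ, ℂ)) (R : ℝ≥0) (T : ℝ) :
    ∃ C : ℝ≥0, ∀ (γ : ℝ≥0) (p q : ℝ≥0∞), γ ≠ 0 → 1 ≤ p → p ≤ q →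
      ∀ ψ : ℝ → ℝ, (∀ s, ‖ψ s‖ ≤ 1) → ψ.support ⊆ Icc 0 (R : ℝ) →
      ∀ S ⊆ Icc (-T) T, ∀ g : ℝ × ℝ → ℂ, Integrable g → MemLp g p →
        eLpNorm (fun z : ℝ × ℝ => z.1 ^ (1 / q).toReal * ⨆ t ∈ S,
            ‖((ψ ((γ : ℝ)⁻¹ * z.1) : ℝ) : ℂ) *
              Aop (invFt2 fun ξ => m ((γ : ℝ) • ξ) * ft2 g ξ) t z.1 z.2‖) q volume ≤
          C * (γ : ℝ≥0∞) ^ (3 * (1 / q).toReal - 2 * (1 / p).toReal) * eLpNorm g p volume := by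
  obtain ⟨K, hK⟩ := exists_enorm_invFt2_dilate_le m
  let A : ℝ≥0 := K * (2 * (1 + (T * R) ^ 2)).toNNReal * (2 * π).toNNReal
  refine ⟨A * (1 + R ^ 2), fun γ p q hγ hp hpq ψ hψ hsupp S hS g hg hgp => ?_⟩
  have hγ₀ : 0 < (γ : ℝ) := by positivity
  have hR : (R ^ 2 : ℝ≥0∞) ^ (1 / q).toReal ≤ 1 + R ^ 2 := by
    calc (R ^ 2 : ℝ≥0∞) ^ (1 / q).toReal ≤ (1 + R ^ 2) ^ (1 / q).toReal := by
          gcongr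
          exact le_add_self
      _ ≤ 1 + R ^ 2 := (ENNReal.rpow_le_rpow_of_exponent_le le_self_add
          (one_div_toReal_le_one (hp.trans hpq))).trans_eq (ENNReal.rpow_one _)
  have hpoint (z : ℝ × ℝ) (hz : z.1 ∈ Icc 0 (R * γ : ℝ)) (t : ℝ) (ht : t ∈ S) :
      ‖((ψ ((γ : ℝ)⁻¹ * z.1) : ℝ) : ℂ) *
          Aop (invFt2 fun ξ => m ((γ : ℝ) • ξ) * ft2 g ξ) t z.1 z.2‖ₑ ≤
        A * eLpNorm g p (stripMeasure γ z.2) := by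
    have htr : |t * z.1| ≤ T * R * γ := by
      rw [abs_mul, mul_assoc, abs_of_nonneg hz.1]
      exact mul_le_mul (abs_le.2 (hS ht)) hz.2 hz.1 ((abs_nonneg t).trans (abs_le.2 (hS ht)))
    rw [enorm_mul]
    refine (mul_le_of_le_one_left' ?_).trans
      (enorm_Aop_invFt2_mul_ft2_le hγ (hK γ hγ₀.ne') hp hg htr z.2)
    rw [← ofReal_norm, Complex.norm_real]
    exact ENNReal.ofReal_le_one.2 (hψ _)
  refine (eLpNorm_le_of_enorm_le_eLpNorm_stripMeasure hγ hp hpq hgp (A := A) (R := R) ?_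
    fun z hz => enorm_biSup_norm_le S _ (hpoint z hz)).trans ?_
  · refine fun z hz => ⟨?_, mem_univ _⟩
    have hne : ψ ((γ : ℝ)⁻¹ * z.1) ≠ 0 := fun h => hz (by simp [h])
    obtain ⟨h₀, h₁⟩ := hsupp hne
    rw [inv_mul_eq_div] at h₀ h₁
    exact ⟨by simpa [hγ₀.ne'] using mul_nonneg h₀ hγ₀.le, (div_le_iff₀ hγ₀).1 h₁⟩
  · rw [ENNReal.coe_mul A, ENNReal.coe_add, ENNReal.coe_one, ENNReal.coe_pow]
    gcongr

lemma Aop_zero (t r x₃ : ℝ) : Aop 0 t r x₃ = 0 := by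
  simp [Aop, ft2]

lemma projLt_of_not_integrable (φ : ℝ → ℝ) (l : ℤ)
    {g : ℝ × ℝ → ℂ} (hg : ¬ Integrable g) : projLt φ l g = 0 := by
  ext x
  simp [projLt, ft2_of_not_integrable hg]

lemma coe_two_zpow_rpow (k : ℤ) (a b : ℝ) :
    (((2 : ℝ≥0) ^ k : ℝ≥0) : ℝ≥0∞) ^ (3 * a - 2 * b) =
      ENNReal.ofReal ((2 : ℝ) ^ (3 * (k : ℝ) * a - 2 * (k : ℝ) * b)) := by
  rw [← ENNReal.ofReal_coe_nnreal, ENNReal.ofReal_rpow_of_pos (by positivity), NNReal.coe_zpow,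
    NNReal.coe_ofNat, ← Real.rpow_intCast, ← Real.rpow_mul zero_le_two]
  ring_nf

theorem Aop_low_freq_small_radius_general (φ : ℝ → ℝ) (hφ : IsLPBump φ) (T : ℝ) :
    ∃ C : ℝ, 0 < C ∧ ∀ p q : ℝ≥0∞, 1 ≤ p → p ≤ q → ∀ S ⊆ Icc (-T) T,
      ∀ (k : ℤ) (g : ℝ × ℝ → ℂ),
        eLpNorm (fun z : ℝ × ℝ => z.1 ^ (1 / q).toReal *
            ⨆ t ∈ S, ‖((φ ((2 : ℝ) ^ (-k) * z.1) : ℝ) : ℂ) *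
              Aop (projLt φ (-k) g) t z.1 z.2‖) q volume ≤
          ENNReal.ofReal (C * (2 : ℝ) ^
              (3 * (k : ℝ) * (1 / q).toReal - 2 * (k : ℝ) * (1 / p).toReal)) *
            eLpNorm g p volume := by
  obtain ⟨C, hC⟩ := exists_eLpNorm_maximal_Aop_le hφ.lowMultiplier 3 T
  refine ⟨C + 1, by positivity, fun p q hp hpq S hS k g => ?_⟩
  by_cases hg : Integrable g
  swap
  -- Here `ft2 g` is everywhere a junk integral, equal to `0`.
  · simp [projLt_of_not_integrable φ (-k) hg, Aop_zero]
  by_cases hgp : MemLp g p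
  swap
  · have htop : eLpNorm g p volume = ∞ := not_lt_top_iff.1 fun h => hgp ⟨hg.1, h⟩
    rw [htop, ENNReal.mul_top (ENNReal.ofReal_pos.2 (by positivity)).ne']
    exact le_top
  have hmain := hC (2 ^ k) p q (by positivity) hp hpq φ hφ.norm_le_one hφ.support_subset S hS g
    hg hgp
  rw [coe_two_zpow_rpow, NNReal.coe_zpow, NNReal.coe_ofNat, ← zpow_neg] at hmain
  rw [hφ.projLt_eq_invFt2, neg_neg]
  refine hmain.trans ?_
  rw [ENNReal.ofReal_mul (by positivity), ← ENNReal.ofReal_coe_nnreal]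
  gcongr
  exact le_add_of_nonneg_right zero_le_one

/-- The estimate (2.7) of the paper: for `k ≤ −2` and `1 ≤ p ≤ q ≤ ∞`,
`‖r^{1/q} sup_{1<t<2} |φ_k(r) 𝒜_t 𝒫_{<−k} g|‖_{L^q_{r,x₃}} ≲ 2^{3k/q − 2k/p} ‖g‖_{L^p}`
with constant independent of `k, g`. -/
theorem Aop_low_freq_small_radius
    (φ : ℝ → ℝ) (hφ : IsLPBump φ) (p q : ℝ≥0∞) (hp : 1 ≤ p) (hpq : p ≤ q) :
    ∃ C : ℝ, 0 < C ∧ ∀ k : ℤ, k ≤ -2 → ∀ g : ℝ × ℝ → ℂ,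
      eLpNorm (fun z : ℝ × ℝ => z.1 ^ (1/q).toReal *
          ⨆ t ∈ Set.Ioo (1:ℝ) 2,
            ‖((φ ((2:ℝ) ^ (-k) * z.1) : ℝ) : ℂ) * Aop (projLt φ (-k) g) t z.1 z.2‖)
          q volume ≤
        ENNReal.ofReal (C * (2:ℝ) ^
            (3 * (k:ℝ) * (1/q).toReal - 2 * (k:ℝ) * (1/p).toReal)) *
          eLpNorm g p volume := by
  obtain ⟨C, hC₀, hC⟩ := Aop_low_freq_small_radius_general φ hφ 2
  exact ⟨C, hC₀, fun k _ g => hC p q hp hpq _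
    (Ioo_subset_Icc_self.trans (Icc_subset_Icc_left (by norm_num))) k g⟩

end
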